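/- Let n be an odd integer with n ≥ 3, let σ^n be an n-simplex in Euclidean space, and let τ^p be a p-face of σ^n, where p is an even integer with 0 ≤ p ≤ n−2. Then Σ_{i=p+1}^{n} (−1)^{i−p+1} Σ_{σ^n ≻ η^i ≻ τ^p} α(η^i, σ^n) = 2·α(τ^p, σ^n), where the inner sum is over all i-faces η^i of σ^n that have τ^p as a face (including, for i = n, the simplex σ^n itself). -/

import Mathlib

open Filter MeasureTheory Geometry
open scoped BigOperators

noncomputable section

attribute [local instance 0] Classical.propDecidable

namespace AngleDefectPaper

/-- `N`-dimensional Euclidean space. -/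
abbrev Euc (N : ℕ) : Type := EuclideanSpace ℝ (Fin N)

variable {N : ℕ}

/-- The open simplex determined by a finite set of points: the intrinsic
(relative) interior of its convex hull. -/
def openSimplex (s : Finset (Euc N)) : Set (Euc N) :=
  intrinsicInterior ℝ (convexHull ℝ (s : Set (Euc N)))

/-- The normalized solid angle `α(η, σ)` of the simplex `σ` along its face `η`:
the fraction of a small sphere (in the affine span of `σ`) centered at a point of
the open face `η` that lies in `σ`, normalized so that the full sphere has
measure `1`.  It is computed as the limiting fraction of a small ambient ball
centered at the centroid of `η` that lies in the cylinder obtained by thickening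
`σ` in the directions orthogonal to its affine span. -/
def solidAngle (η σ : Finset (Euc N)) : ℝ :=
  limUnder (nhdsWithin (0 : ℝ) (Set.Ioi 0)) fun ε =>
    (volume (Metric.ball (η.centroid ℝ id) ε ∩
      {y : Euc N | ∃ c ∈ convexHull ℝ (σ : Set (Euc N)),
        ∃ w ∈ (vectorSpan ℝ (σ : Set (Euc N)))ᗮ, y = c + w})).toReal /
    (volume (Metric.ball (η.centroid ℝ id) ε)).toReal

/-- `Tcone r` is (a realization in the plane of) the open cone on `r` points:
`r` half-open segments emanating from the origin in pairwise distinct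
directions, glued at the origin.  For `r = 0` it is a single point. -/
def Tcone (r : ℕ) : Set (ℝ × ℝ) :=
  {0} ∪ ⋃ k ∈ Finset.range r,
    {p : ℝ × ℝ | ∃ t : ℝ, 0 ≤ t ∧ t < 1 ∧ p = t • ((1 : ℝ), (k : ℝ))}

/-- `x` has a neighborhood in `S` homeomorphic to `T_r × ℝ^{n-1}`, with the
homeomorphism taking `x` into the apex set `{cone point} × ℝ^{n-1}`. -/
def HasConeNbhd (n r : ℕ) (S : Set (Euc N)) (x : Euc N) : Prop :=
  ∃ U : Set (Euc N), U ∈ nhdsWithin x S ∧ U ⊆ S ∧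
    ∃ h : U ≃ₜ (Tcone r) × EuclideanSpace ℝ (Fin (n - 1)),
      ∀ hx : x ∈ U, ((h ⟨x, hx⟩).1 : ℝ × ℝ) = 0

/-- The set of points of `|K|` having a neighborhood of cone type `r`. -/
def csetAux (n : ℕ) (K : SimplicialComplex ℝ (Euc N)) (r : ℕ) : Set (Euc N) :=
  {x | x ∈ K.space ∧ HasConeNbhd n r K.space x}

/-- The sets `C_r(K)`: for `r ≠ 2` the points with a cone-type-`r` neighborhood,
and `C_2(K)` is the complement in `|K|` of the union of the others. -/
def cset (n : ℕ) (K : SimplicialComplex ℝ (Euc N)) (r : ℕ) : Set (Euc N) :=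
  if r = 2 then K.space \ ⋃ r' ∈ {r' : ℕ | r' ≠ 2}, csetAux n K r'
  else csetAux n K r

/-- The stratification rank `r(η) = r/2`, where `C_r(K)` is the (unique) set of
the stratification containing the open simplex of `η`. -/
def strRank (n : ℕ) (K : SimplicialComplex ℝ (Euc N)) (η : Finset (Euc N)) : ℝ :=
  if h : ∃ r : ℕ, r ≠ 2 ∧ openSimplex η ⊆ csetAux n K r then (h.choose : ℝ) / 2
  else 1

/-- The set of `n`-simplices of `K` having `η` as a face. -/
def nSimplicesOn (n : ℕ) (K : SimplicialComplex ℝ (Euc N)) (η : Finset (Euc N)) :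
    Set (Finset (Euc N)) :=
  {σ | σ ∈ K.faces ∧ σ.card = n + 1 ∧ η ⊆ σ}

/-- The generalized angle defect `D(η) = r(η) - Σ_{σⁿ ≻ η} α(η, σⁿ)`. -/
def defect (n : ℕ) (K : SimplicialComplex ℝ (Euc N)) (η : Finset (Euc N)) : ℝ :=
  strRank n K η - ∑ᶠ σ ∈ nSimplicesOn n K η, solidAngle η σ

/-- The angle defect sequence `a_m = 4 B_{m+2} (2^{m+2} - 1)/(m+2)`, where `B_k`
is the `k`-th Bernoulli number (with the convention `B_1 = -1/2`). -/
def ads (m : ℕ) : ℚ :=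
  4 * bernoulli (m + 2) * (2 ^ (m + 2) - 1) / (m + 2)

/-- The ascending stratified curvature of a simplex `τ` (of dimension
`p = τ.card - 1`) in the `n`-dimensional complex `K`. -/
def asc (n : ℕ) (K : SimplicialComplex ℝ (Euc N)) (τ : Finset (Euc N)) : ℝ :=
  (ads (τ.card - 1) : ℝ) * defect n K τ +
    (ads (τ.card - 1) : ℝ) / 2 *
      ∑ i ∈ Finset.Icc τ.card n,
        (-1 : ℝ) ^ (i - (τ.card - 1)) *
          ∑ᶠ η ∈ {η : Finset (Euc N) | η ∈ K.faces ∧ η.card = i + 1 ∧ τ ⊆ η},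
            defect n K η

/-- The stratified Euler characteristic `χˢ(K) = Σ_{η ∈ K} r(η) (-1)^{dim η}`. -/
def stratEuler (n : ℕ) (K : SimplicialComplex ℝ (Euc N)) : ℝ :=
  ∑ᶠ η ∈ K.faces, strRank n K η * (-1 : ℝ) ^ (η.card - 1)

/-- `fcount F k` is the number of `k`-dimensional simplices in `F`. -/
def fcount (F : Set (Finset (Euc N))) (k : ℕ) : ℕ :=
  {s ∈ F | s.card = k + 1}.ncard

/-- The combinatorial Euler characteristic `χ(F) = Σ_k (-1)^k f_k(F)`. -/
def eulerChar (F : Set (Finset (Euc N))) : ℤ :=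
  ∑ᶠ k : ℕ, (-1 : ℤ) ^ k * fcount F k

/-- The link of `η` in `K`: all simplices `ω` of `K` disjoint from `η` such
that the join `η ∗ ω` is a simplex of `K`. -/
def linkFaces (K : SimplicialComplex ℝ (Euc N)) (η : Finset (Euc N)) :
    Set (Finset (Euc N)) :=
  {ω | ω ∈ K.faces ∧ Disjoint η ω ∧ η ∪ ω ∈ K.faces}

/-- `K` is an `n`-dimensional simplicial complex. -/
def IsNDim (n : ℕ) (K : SimplicialComplex ℝ (Euc N)) : Prop :=
  (∀ s ∈ K.faces, s.card ≤ n + 1) ∧ ∃ s ∈ K.faces, s.card = n + 1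

/-- `L` is a subdivision of `K`: same underlying space, and every open simplex
of `L` is contained in an open simplex of `K`. -/
def IsSubdivision (K L : SimplicialComplex ℝ (Euc N)) : Prop :=
  L.space = K.space ∧ ∀ s ∈ L.faces, ∃ t ∈ K.faces, openSimplex s ⊆ openSimplex t
/-- Barycentric coordinates of a simplex, extended to the whole space by orthogonal projection. -/
lemma exists_coords (σ : Finset (Euc N)) (hne : σ.Nonempty)
    (hind : AffineIndependent ℝ ((↑) : σ → Euc N)) :
    ∃ l : Euc N → (Euc N →ᵃ[ℝ] ℝ),
      (∀ j ∈ σ, l j j = 1) ∧ (∀ j ∈ σ, ∀ k ∈ σ, j ≠ k → l j k = 0) ∧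
      {y : Euc N | ∃ c ∈ convexHull ℝ (σ : Set (Euc N)),
        ∃ w ∈ (vectorSpan ℝ (σ : Set (Euc N)))ᗮ, y = c + w} = {y | ∀ j ∈ σ, 0 ≤ l j y} := by
  have hne' : (σ : Set (Euc N)).Nonempty := hne
  have : Nonempty (σ : Set (Euc N)) := hne'.to_subtype
  have : Nonempty (affineSpan ℝ (σ : Set (Euc N))) :=
    ((affineSpan_nonempty ℝ).2 hne').to_subtype
  let A := affineSpan ℝ (σ : Set (Euc N))
  let f : σ → A := fun j => ⟨j, subset_affineSpan ℝ _ j.2⟩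
  have hf : AffineIndependent ℝ f := by
    apply AffineIndependent.of_comp A.subtype
    exact hind
  have hr : Set.range f = ((↑) : A → Euc N) ⁻¹' (σ : Set (Euc N)) := by
    ext x
    constructor
    · rintro ⟨j, rfl⟩
      exact j.2
    · intro hx
      exact ⟨⟨x, hx⟩, rfl⟩
  have ht : affineSpan ℝ (Set.range f) = ⊤ := by
    rw [hr]
    exact affineSpan_coe_preimage_eq_top _
  let b : AffineBasis σ ℝ A := ⟨f, hf, ht⟩
  have hb : ∀ j, b j = f j := fun _ => rfl
  let pr : Euc N →ᵃ[ℝ] A := (EuclideanGeometry.orthogonalProjection A).toAffineMap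
  let l : Euc N → (Euc N →ᵃ[ℝ] ℝ) := fun j =>
    if h : j ∈ σ then (b.coord ⟨j, h⟩).comp pr else AffineMap.const ℝ _ 0
  have hl : ∀ j (h : j ∈ σ) y, l j y = b.coord ⟨j, h⟩ (pr y) := by
    intro j h y
    simp [l, h]
  have hpr : ∀ k (h : k ∈ σ), pr k = b ⟨k, h⟩ := by
    intro k h
    exact EuclideanGeometry.orthogonalProjection_mem_subspace_eq_self (f ⟨k, h⟩)
  have h1 : ∀ j ∈ σ, l j j = 1 := by
    intro j h
    rw [hl j h, hpr j h, b.coord_apply_eq]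
  have h2 : ∀ j ∈ σ, ∀ k ∈ σ, j ≠ k → l j k = 0 := by
    intro j h k hk hjk
    rw [hl j h, hpr k hk, b.coord_apply_ne]
    simpa using hjk
  refine ⟨l, h1, h2, ?_⟩
  ext y
  constructor
  · rintro ⟨c, hc, w, hw, rfl⟩ j hj
    have e : pr (c + w) = pr c := by
      apply EuclideanGeometry.orthogonalProjection_eq_orthogonalProjection_iff_vsub_mem.2
      rw [direction_affineSpan]
      simpa using hw
    rw [hl j hj, e, ← hl j hj]
    have hconv : Convex ℝ {y | 0 ≤ l j y} := (convex_Ici (0 : ℝ)).affine_preimage (l j)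
    refine convexHull_min ?_ hconv hc
    intro k hk
    by_cases hjk : j = k
    · subst hjk
      simp [h1 j hj]
    · simp [h2 j hj k hk hjk]
  · intro hy
    refine ⟨(pr y : Euc N), ?_, y - (pr y : Euc N), ?_, by simp⟩
    · have e := b.affineCombination_coord_eq_self (pr y)
      have e2 := congrArg A.subtype e
      rw [Finset.map_affineCombination _ _ _ (b.sum_coord_apply_eq_one _)] at e2
      have e3 : A.subtype (pr y) = (pr y : Euc N) := rfl
      rw [← e3, ← e2]
      have hrange : Set.range (A.subtype ∘ b) = (σ : Set (Euc N)) := by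
        ext x
        constructor
        · rintro ⟨j, rfl⟩
          exact j.2
        · intro hx
          exact ⟨⟨x, hx⟩, rfl⟩
      rw [← hrange]
      apply affineCombination_mem_convexHull
      · rintro ⟨j, hj⟩ -
        have := hy j hj
        rwa [hl j hj] at this
      · exact b.sum_coord_apply_eq_one _
    · rw [← direction_affineSpan]
      exact EuclideanGeometry.vsub_orthogonalProjection_mem_direction_orthogonal A y

/-- The part of the unit ball in the cone cut out by the linear parts of `l j`, `j ∈ S`. -/
def coneBall (l : Euc N → (Euc N →ᵃ[ℝ] ℝ)) (S : Finset (Euc N)) : Set (Euc N) :=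
  Metric.ball 0 1 ∩ {x | ∀ j ∈ S, 0 ≤ (l j).linear x}

lemma affine_eq (l : Euc N →ᵃ[ℝ] ℝ) (c y : Euc N) : l y = l.linear (y - c) + l c := by
  have := l.map_vadd c (y - c)
  simpa using this

open scoped Pointwise in
lemma solidAngle_eq (σ η : Finset (Euc N)) (hη : η ⊆ σ) (hne : η.Nonempty)
    (l : Euc N → (Euc N →ᵃ[ℝ] ℝ))
    (h1 : ∀ j ∈ σ, l j j = 1) (h2 : ∀ j ∈ σ, ∀ k ∈ σ, j ≠ k → l j k = 0)
    (h3 : {y : Euc N | ∃ c ∈ convexHull ℝ (σ : Set (Euc N)),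
        ∃ w ∈ (vectorSpan ℝ (σ : Set (Euc N)))ᗮ, y = c + w} = {y | ∀ j ∈ σ, 0 ≤ l j y}) :
    solidAngle η σ = volume.real (coneBall l (σ \ η)) / volume.real (Metric.ball (0 : Euc N) 1) := by
  set c := η.centroid ℝ id with hc
  have hsum : ∑ i ∈ η, η.centroidWeights ℝ i = 1 :=
    Finset.sum_centroidWeights_eq_one_of_nonempty ℝ η hne
  have hlc : ∀ j, l j c = ∑ k ∈ η, (η.card : ℝ)⁻¹ * l j k := by
    intro j
    rw [hc, Finset.centroid_def, Finset.map_affineCombination _ _ _ hsum,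
      Finset.affineCombination_eq_linear_combination _ _ _ hsum]
    simp
  have hc0 : ∀ j ∈ σ \ η, l j c = 0 := by
    intro j hj
    rw [Finset.mem_sdiff] at hj
    rw [hlc]
    apply Finset.sum_eq_zero
    intro k hk
    rw [h2 j hj.1 k (hη hk) (fun h => hj.2 (h ▸ hk)), mul_zero]
  have hcpos : ∀ j ∈ η, 0 < l j c := by
    intro j hj
    rw [hlc, Finset.sum_eq_single_of_mem j hj]
    · rw [h1 j (hη hj)]
      have : 0 < η.card := hne.card_pos
      positivity
    · intro k hk hkj
      rw [h2 j (hη hj) k (hη hk) hkj.symm, mul_zero]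
  have hcont : ∀ j, Continuous (l j) := fun j => (l j).continuous_of_finiteDimensional
  have hopen : ∀ᶠ y in nhds c, ∀ j ∈ η, 0 < l j y := by
    rw [Filter.eventually_all_finset]
    intro j hj
    exact (hcont j).continuousAt.eventually (lt_mem_nhds (hcpos j hj))
  obtain ⟨δ, hδ, hball⟩ := Metric.eventually_nhds_iff_ball.1 hopen
  have hscale : ∀ (ε : ℝ), 0 < ε → ∀ U : Set (Euc N),
      volume ((fun y => -c + y) ⁻¹' (ε • U)) = ENNReal.ofReal (ε ^ N) * volume U := by
    intro ε hε U
    rw [measure_preimage_add, Measure.addHaar_smul]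
    simp [abs_of_pos hε]
  unfold solidAngle
  apply Filter.Tendsto.limUnder_eq
  apply tendsto_nhds_of_eventually_eq
  filter_upwards [Ioo_mem_nhdsGT hδ] with ε hε
  have hε0 := hε.1
  rw [h3, ← hc]
  have e1 : Metric.ball c ε ∩ {y | ∀ j ∈ σ, 0 ≤ l j y}
      = (fun y => -c + y) ⁻¹' (ε • coneBall l (σ \ η)) := by
    ext y
    rw [Set.mem_preimage, Set.mem_smul_set_iff_inv_smul_mem₀ hε0.ne']
    have hb : y ∈ Metric.ball c ε ↔ ε⁻¹ • (-c + y) ∈ Metric.ball (0 : Euc N) 1 := by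
      rw [mem_ball_zero_iff, norm_smul, mem_ball_iff_norm, Real.norm_eq_abs,
        abs_of_pos (inv_pos.2 hε0), inv_mul_lt_iff₀ hε0, mul_one, neg_add_eq_sub]
    have hl : ∀ j ∈ σ \ η, (0 ≤ l j y ↔ 0 ≤ (l j).linear (ε⁻¹ • (-c + y))) := by
      intro j hj
      rw [affine_eq (l j) c y, hc0 j hj, add_zero, map_smul, neg_add_eq_sub, smul_eq_mul,
        mul_nonneg_iff_of_pos_left (inv_pos.2 hε0)]
    constructor
    · rintro ⟨hy1, hy2⟩
      exact ⟨hb.1 hy1, fun j hj => (hl j hj).1 (hy2 j (Finset.mem_sdiff.1 hj).1)⟩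
    · rintro ⟨hy1, hy2⟩
      refine ⟨hb.2 hy1, fun j hj => ?_⟩
      by_cases hjη : j ∈ η
      · exact (hball y (Metric.ball_subset_ball hε.2.le (hb.2 hy1)) j hjη).le
      · have hj' := Finset.mem_sdiff.2 ⟨hj, hjη⟩
        exact (hl j hj').2 (hy2 j hj')
  have e2 : Metric.ball c ε = (fun y => -c + y) ⁻¹' (ε • Metric.ball (0 : Euc N) 1) := by
    ext y
    rw [Set.mem_preimage, Set.mem_smul_set_iff_inv_smul_mem₀ hε0.ne',
      mem_ball_zero_iff, norm_smul, mem_ball_iff_norm, Real.norm_eq_abs,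
      abs_of_pos (inv_pos.2 hε0), inv_mul_lt_iff₀ hε0, mul_one, neg_add_eq_sub]
  rw [e1, e2, hscale ε hε0, hscale ε hε0, ENNReal.toReal_mul, ENNReal.toReal_mul,
    ENNReal.toReal_ofReal (by positivity)]
  rw [mul_div_mul_left _ _ (by positivity)]
  rfl

/-- Inclusion-exclusion. -/
lemma incl_excl (H : Euc N → Set (Euc N)) (hH : ∀ j, MeasurableSet (H j)) (S : Finset (Euc N)) :
    ∀ A : Set (Euc N), volume A ≠ ⊤ →
    volume.real (A ∩ {x | ∀ j ∈ S, x ∉ H j}) =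
      ∑ T ∈ S.powerset, (-1 : ℝ) ^ T.card * volume.real (A ∩ {x | ∀ j ∈ T, x ∈ H j}) := by
  induction S using Finset.induction_on with
  | empty => intro A _; simp
  | insert a S ha ih =>
    intro A hA
    rw [Finset.sum_powerset_insert ha, ← ih A hA]
    have hA' : volume (A ∩ H a) ≠ ⊤ := measure_ne_top_of_subset Set.inter_subset_left hA
    have e1 : ∑ T ∈ S.powerset, (-1 : ℝ) ^ (insert a T).card *
          volume.real (A ∩ {x | ∀ j ∈ insert a T, x ∈ H j})
        = - volume.real ((A ∩ H a) ∩ {x | ∀ j ∈ S, x ∉ H j}) := by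
      rw [ih _ hA', ← Finset.sum_neg_distrib]
      apply Finset.sum_congr rfl
      intro T hT
      have haT : a ∉ T := fun h => ha (Finset.mem_powerset.1 hT h)
      rw [Finset.card_insert_of_notMem haT, pow_succ]
      have : A ∩ {x | ∀ j ∈ insert a T, x ∈ H j} = (A ∩ H a) ∩ {x | ∀ j ∈ T, x ∈ H j} := by
        ext x
        simp [and_assoc]
      rw [this]
      ring
    rw [e1]
    have hB : volume (A ∩ {x | ∀ j ∈ S, x ∉ H j}) ≠ ⊤ :=
      measure_ne_top_of_subset Set.inter_subset_left hA
    have e2 := measureReal_inter_add_sdiff (μ := volume)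
      (s := A ∩ {x | ∀ j ∈ S, x ∉ H j}) (hH a) hB
    have e3 : (A ∩ {x | ∀ j ∈ S, x ∉ H j}) ∩ H a = (A ∩ H a) ∩ {x | ∀ j ∈ S, x ∉ H j} := by
      ext x
      simp only [Set.mem_inter_iff]
      tauto
    have e4 : (A ∩ {x | ∀ j ∈ S, x ∉ H j}) \ H a = A ∩ {x | ∀ j ∈ insert a S, x ∉ H j} := by
      ext x
      simp only [Set.mem_inter_iff, Set.mem_sdiff, Set.mem_ofPred_eq, Finset.forall_mem_insert]
      tauto
    rw [e3, e4] at e2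
    linarith

open scoped Pointwise in
lemma coneBall_alt (l : Euc N → (Euc N →ᵃ[ℝ] ℝ)) (J : Finset (Euc N))
    (hl : ∀ j ∈ J, (l j).linear ≠ 0) :
    volume.real (coneBall l J) =
      ∑ T ∈ J.powerset, (-1 : ℝ) ^ T.card * volume.real (coneBall l T) := by
  have hcont : ∀ j, Continuous (l j).linear := fun j =>
    (l j).linear.continuous_of_finiteDimensional
  have h := incl_excl (fun j => {x | 0 ≤ (l j).linear x})
    (fun j => (isClosed_le continuous_const (hcont j)).measurableSet) J
    (Metric.ball (0 : Euc N) 1) measure_ball_lt_top.ne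
  refine Eq.trans ?_ h
  have hneg : volume.real (coneBall l J) = volume.real (-(coneBall l J)) := by
    simp [Measure.real]
  rw [hneg]
  apply measureReal_congr
  have hae : ∀ᵐ x ∂(volume : Measure (Euc N)), ∀ j ∈ J, (l j).linear x ≠ 0 := by
    rw [Filter.eventually_all_finset]
    intro j hj
    have := Measure.addHaar_submodule (volume : Measure (Euc N)) (LinearMap.ker (l j).linear)
      (fun h => hl j hj (LinearMap.ker_eq_top.1 h))
    rw [ae_iff]
    convert this using 2
    ext x
    simp
  filter_upwards [hae] with x hx
  apply propext
  change (-x ∈ coneBall l J) ↔ _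
  have hx2 : x ∈ Metric.ball (0 : Euc N) 1 ∩ {x | ∀ j ∈ J, x ∉ {x | 0 ≤ (l j).linear x}} ↔
    -x ∈ coneBall l J := by
    simp only [coneBall, Set.mem_inter_iff, mem_ball_zero_iff, norm_neg, Set.mem_ofPred_eq, map_neg,
      not_le]
    refine and_congr_right fun _ => forall₂_congr fun j hj => ?_
    have := hx j hj
    constructor
    · intro h; linarith
    · intro h; exact lt_of_le_of_ne (by linarith) this
  exact hx2.symm

/-- For an `n`-simplex `σ` in Euclidean space (`n` odd, `n ≥ 3`) and an (even)
`p`-face `τ` of `σ` with `0 ≤ p ≤ n-2`,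
`Σ_{i=p+1}^{n} (-1)^{i-p+1} Σ_{σ ≻ η^i ≻ τ} α(η^i, σ) = 2 α(τ, σ)`. -/
theorem angle_sum_simplex' {N n p : ℕ} (hn : 3 ≤ n) (hodd : Odd n) (hpeven : Even p)
    (hp : p ≤ n - 2) (σ τ : Finset (Euc N))
    (hind : AffineIndependent ℝ ((↑) : σ → Euc N)) (hσcard : σ.card = n + 1)
    (hτ : τ ⊆ σ) (hτcard : τ.card = p + 1) :
    ∑ i ∈ Finset.Icc (p + 1) n, (-1 : ℝ) ^ (i - p + 1) *
        ∑ᶠ η ∈ {η : Finset (Euc N) | η ⊆ σ ∧ η.card = i + 1 ∧ τ ⊆ η},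
          solidAngle η σ =
      2 * solidAngle τ σ := by
  have hτne : τ.Nonempty := Finset.card_pos.1 (by omega)
  obtain ⟨l, h1, h2, h3⟩ := exists_coords σ (hτne.mono hτ) hind
  set J := σ \ τ with hJ
  have hJcard : J.card = n - p := by
    rw [hJ, Finset.card_sdiff_of_subset hτ]
    omega
  have hlin : ∀ j ∈ J, (l j).linear ≠ 0 := by
    intro j hj h0
    rw [hJ, Finset.mem_sdiff] at hj
    obtain ⟨k, hk⟩ := hτne
    have := affine_eq (l j) k j
    rw [h0, h1 j hj.1, h2 j hj.1 k (hτ hk) (fun h => hj.2 (h ▸ hk))] at this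
    simp at this
  have key := coneBall_alt l J hlin
  rw [Finset.sum_powerset, hJcard, Finset.sum_range_succ, ← hJcard, Finset.powersetCard_self,
    Finset.sum_singleton, hJcard] at key
  have hoddJ : Odd (n - p) := Nat.Odd.sub_even (by omega) hodd hpeven
  rw [hoddJ.neg_one_pow] at key
  have key2 : ∑ k ∈ Finset.range (n - p), ∑ T ∈ J.powersetCard k,
      (-1 : ℝ) ^ T.card * volume.real (coneBall l T) = 2 * volume.real (coneBall l J) := by
    linarith
  rw [solidAngle_eq σ τ hτ hτne l h1 h2 h3, ← hJ, ← mul_div_assoc, ← key2, Finset.sum_div]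
  refine Finset.sum_bij' (fun i _ => n - i) (fun k _ => n - k) ?_ ?_ ?_ ?_ ?_
  · intro i hi
    simp only [Finset.mem_Icc, Finset.mem_range] at *
    omega
  · intro i hi
    simp only [Finset.mem_Icc, Finset.mem_range] at *
    omega
  · intro i hi
    simp only [Finset.mem_Icc] at *
    omega
  · intro i hi
    simp only [Finset.mem_range] at *
    omega
  · intro i hi
    simp only [Finset.mem_Icc] at hi
    have hset : {η : Finset (Euc N) | η ⊆ σ ∧ η.card = i + 1 ∧ τ ⊆ η} =
        ((σ.powerset.filter (fun η => η.card = i + 1 ∧ τ ⊆ η) : Finset (Finset (Euc N))) :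
          Set (Finset (Euc N))) := by
      ext η
      simp
    rw [hset, finsum_mem_coe_finset, Finset.mul_sum, Finset.sum_div]
    refine Finset.sum_bij' (fun η _ => σ \ η) (fun T _ => σ \ T) ?_ ?_ ?_ ?_ ?_
    · intro η hη
      simp only [Finset.mem_filter, Finset.mem_powerset] at hη
      rw [Finset.mem_powersetCard]
      refine ⟨Finset.sdiff_subset_sdiff le_rfl hη.2.2, ?_⟩
      rw [Finset.card_sdiff_of_subset hη.1]
      omega
    · intro T hT
      rw [Finset.mem_powersetCard] at hT
      have hTσ : T ⊆ σ := hT.1.trans Finset.sdiff_subset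
      simp only [Finset.mem_filter, Finset.mem_powerset]
      refine ⟨Finset.sdiff_subset, ?_, ?_⟩
      · rw [Finset.card_sdiff_of_subset hTσ]
        omega
      · intro x hx
        exact Finset.mem_sdiff.2 ⟨hτ hx, fun h => (Finset.mem_sdiff.1 (hT.1 h)).2 hx⟩
    · intro η hη
      simp only [Finset.mem_filter, Finset.mem_powerset] at hη
      exact Finset.sdiff_sdiff_eq_self hη.1
    · intro T hT
      rw [Finset.mem_powersetCard] at hT
      exact Finset.sdiff_sdiff_eq_self (hT.1.trans Finset.sdiff_subset)
    · intro η hη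
      simp only [Finset.mem_filter, Finset.mem_powerset] at hη
      rw [solidAngle_eq σ η hη.1 (hτne.mono hη.2.2) l h1 h2 h3,
        Finset.card_sdiff_of_subset hη.1, ← mul_div_assoc]
      have e : (-1 : ℝ) ^ (i - p + 1) = (-1 : ℝ) ^ (σ.card - η.card) := by
        apply neg_one_pow_congr
        rw [hσcard, hη.2.1]
        obtain ⟨a, rfl⟩ := hodd
        obtain ⟨b, rfl⟩ := hpeven
        simp only [Nat.even_iff]
        omega
      rw [e]

end AngleDefectPaper
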